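/- (Pfaffian/hafnian dichotomy) Let l be even, ln ≤ N, H(s) an ln×N matrix for 1 ≤ s ≤ r, A a 1-dimensional l-block array of size N, and define Q(I^(1),…,I^(r)) = ∑_{K ∈ C([N],l)} A(K) ∏_{s=1}^r det(H(s)_{I^(s),K}). Then Pf^[l,r](Q) = ∑_{P ∈ C([N],ln)} Pf^[l,1](A_P) ∏_{s=1}^r det(H(s)_{[ln],P}) if r is odd, and Pf^[l,r](Q) = ∑_{P ∈ C([N],ln)} Hf^[l,1](A_P) ∏_{s=1}^r det(H(s)_{[ln],P}) if r is even. -/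

import Mathlib

open scoped Classical
open Finset Equiv

noncomputable section

variable {F : Type*} [Field F] [CharZero F]

/-- The hyperdeterminant `det^[m]` of an `m`-dimensional tensor of size `n`:
`∑_{σ₁,…,σ_{m-1}} sgn(σ₁⋯σ_{m-1}) ∏_i A(i, σ₁ i, …, σ_{m-1} i)`, encoded as a sum over
`m`-tuples of permutations whose `0`-th component is forced to be the identity. -/
def hyperdet (m n : ℕ) (A : (Fin m → Fin n) → F) : F :=
  ∑ σ : Fin m → Equiv.Perm (Fin n),
    if (∀ k : Fin m, k.1 = 0 → σ k = 1) then
      (∏ k, ((Equiv.Perm.sign (σ k) : ℤ) : F)) * ∏ i, A fun k => σ k i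
    else 0

/-- `blk l n j i` is the `i`-th entry of the `j`-th consecutive block of length `l` in `[l*n]`. -/
def blk (l n : ℕ) (j : Fin n) (i : Fin l) : Fin (l * n) :=
  ⟨j.1 * l + i.1, by
    have hi := i.2; have hj := j.2
    calc j.1 * l + i.1 < (j.1 + 1) * l := by rw [Nat.add_mul, Nat.one_mul]; omega
      _ ≤ n * l := Nat.mul_le_mul_right l hj
      _ = l * n := Nat.mul_comm n l⟩

/-- A permutation of `[l*n]` is block-increasing if it is increasing on each of the
`n` consecutive blocks of length `l`. -/
def BlockInc (l n : ℕ) (σ : Equiv.Perm (Fin (l * n))) : Prop :=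
  ∀ j : Fin n, StrictMono fun i : Fin l => σ (blk l n j i)

/-- The `j`-th block of `σ`, as a subset of `[l*n]`. -/
def blkSet (l n : ℕ) (σ : Equiv.Perm (Fin (l * n))) (j : Fin n) : Finset (Fin (l * n)) :=
  Finset.image (fun i => σ (blk l n j i)) Finset.univ

/-- The hyperpfaffian `Pf^[l,m]` of an `m`-dimensional `l`-block array of size `l*n`
(the `m` dimensions are indexed by an arbitrary finite type `ι`). -/
def hyperpf (l n : ℕ) {ι : Type*} [Fintype ι]
    (B : (ι → Finset (Fin (l * n))) → F) : F :=
  (n.factorial : F)⁻¹ *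
    ∑ σ : ι → Equiv.Perm (Fin (l * n)),
      if ∀ s, BlockInc l n (σ s) then
        (∏ s, ((Equiv.Perm.sign (σ s) : ℤ) : F)) *
          ∏ k : Fin n, B fun s => blkSet l n (σ s) k
      else 0

/-- The hyperhafnian `Hf^[l,m]` (same sum as the hyperpfaffian, without signs). -/
def hyperhf (l n : ℕ) {ι : Type*} [Fintype ι]
    (B : (ι → Finset (Fin (l * n))) → F) : F :=
  (n.factorial : F)⁻¹ *
    ∑ σ : ι → Equiv.Perm (Fin (l * n)),
      if ∀ s, BlockInc l n (σ s) then
        ∏ k : Fin n, B fun s => blkSet l n (σ s) k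
      else 0



theorem sum_dite_subtype {α : Type*} [Fintype α] (p : α → Prop) [DecidablePred p]
    (f : ∀ x, p x → F) :
    (∑ x, if h : p x then f x h else 0) = ∑ x : {x // p x}, f x.1 x.2 := by
  symm
  refine Fintype.sum_of_injective (fun x : {x // p x} => x.1) Subtype.val_injective _ _ ?_ ?_
  · intro x hx
    rw [dif_neg]
    intro h
    exact hx ⟨⟨x, h⟩, rfl⟩
  · intro x
    rw [dif_pos x.2]

theorem blk_bij (l n : ℕ) :
    Function.Bijective (fun x : Fin n × Fin l => blk l n x.1 x.2) := by
  rw [Fintype.bijective_iff_injective_and_card]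
  constructor
  · rintro ⟨j, i⟩ ⟨j', i'⟩ h
    have h1 : j.1 * l + i.1 = j'.1 * l + i'.1 := congrArg Fin.val h
    have hi := i.2
    have hi' := i'.2
    have hl : 0 < l := by omega
    have e1 : j.1 = j'.1 := by
      have h2 := congrArg (· / l) h1
      simpa [Nat.add_div_of_dvd_right, mul_comm _ l, Nat.mul_add_div hl, Nat.div_eq_of_lt hi,
        Nat.div_eq_of_lt hi'] using h2
    have e2 : i.1 = i'.1 := by rw [e1] at h1; omega
    exact Prod.ext (Fin.ext e1) (Fin.ext e2)
  · simp [mul_comm]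

def blkEquiv (l n : ℕ) : Fin n × Fin l ≃ Fin (l * n) := Equiv.ofBijective _ (blk_bij l n)

theorem blkEquiv_apply (l n : ℕ) (x : Fin n × Fin l) : blkEquiv l n x = blk l n x.1 x.2 := rfl

theorem blkEquiv_symm_blk (l n : ℕ) (k : Fin n) (i : Fin l) :
    (blkEquiv l n).symm (blk l n k i) = (k, i) := by
  rw [Equiv.symm_apply_eq]; rfl

/-- block permutation -/
def blkPerm (l n : ℕ) (ρ : Fin n → Equiv.Perm (Fin l)) : Equiv.Perm (Fin (l * n)) :=
  (blkEquiv l n).permCongr (Equiv.prodCongrRight ρ)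

theorem blkPerm_blk (l n : ℕ) (ρ : Fin n → Equiv.Perm (Fin l)) (k : Fin n) (i : Fin l) :
    blkPerm l n ρ (blk l n k i) = blk l n k (ρ k i) := by
  simp [blkPerm, Equiv.permCongr_apply, blkEquiv_symm_blk, blkEquiv_apply]

theorem blkPerm_sign (l n : ℕ) (ρ : Fin n → Equiv.Perm (Fin l)) :
    Equiv.Perm.sign (blkPerm l n ρ) = ∏ k, Equiv.Perm.sign (ρ k) := by
  simp [blkPerm, Equiv.Perm.sign_permCongr, Equiv.Perm.sign_prodCongrRight]

theorem perm_ext_blk {l n : ℕ} {α : Type*} {f g : Fin (l * n) → α}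
    (h : ∀ k i, f (blk l n k i) = g (blk l n k i)) : f = g := by
  funext x
  obtain ⟨⟨k, i⟩, rfl⟩ := (blkEquiv l n).surjective x
  exact h k i

theorem prod_blk {l n : ℕ} (f : Fin (l * n) → F) :
    ∏ x, f x = ∏ k, ∏ i, f (blk l n k i) := by
  rw [← (blkEquiv l n).prod_comp, Fintype.prod_prod_type]
  rfl

theorem decomp_bij (l n : ℕ) : Function.Bijective
    (fun x : {σ : Equiv.Perm (Fin (l * n)) // BlockInc l n σ} × (Fin n → Equiv.Perm (Fin l)) =>
      x.1.1 * blkPerm l n x.2) := by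
  constructor
  · rintro ⟨⟨σ, hσ⟩, ρ⟩ ⟨⟨σ', hσ'⟩, ρ'⟩ h
    have h1 : ∀ k i, σ (blk l n k (ρ k i)) = σ' (blk l n k (ρ' k i)) := by
      intro k i
      have := congrArg (fun π : Equiv.Perm (Fin (l * n)) => π (blk l n k i)) h
      simpa [blkPerm_blk] using this
    have h2 : ∀ k, (fun i => σ (blk l n k i)) = fun i => σ' (blk l n k i) := by
      intro k
      rw [← (hσ k).range_inj (hσ' k)]
      ext y
      constructor
      · rintro ⟨i, rfl⟩
        exact ⟨ρ' k ((ρ k).symm i), by simp [← h1]⟩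
      · rintro ⟨i, rfl⟩
        exact ⟨ρ k ((ρ' k).symm i), by simp [h1]⟩
    have h3 : σ = σ' := DFunLike.coe_injective (perm_ext_blk fun k i => congrFun (h2 k) i)
    subst h3
    have h4 : ρ = ρ' := by
      funext k
      ext1 i
      exact (hσ k).injective (h1 k i)
    rw [h4]
  · intro π
    have hs : ∀ ρ : Fin n → Equiv.Perm (Fin l),
        blkPerm l n (fun k => (ρ k)⁻¹) * blkPerm l n ρ = 1 := by
      intro ρ
      refine DFunLike.coe_injective (perm_ext_blk fun k i => ?_)
      simp [blkPerm_blk]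
    let ρ : Fin n → Equiv.Perm (Fin l) := fun k => Tuple.sort fun i => π (blk l n k i)
    refine ⟨⟨⟨π * blkPerm l n ρ, ?_⟩, fun k => (ρ k)⁻¹⟩, ?_⟩
    · intro k
      have hm : Monotone ((fun i => π (blk l n k i)) ∘ ρ k) := Tuple.monotone_sort _
      have hinj : Function.Injective ((fun i => π (blk l n k i)) ∘ ρ k) := by
        refine Function.Injective.comp ?_ (ρ k).injective
        intro i j hij
        have := (blk_bij l n).1 (a₁ := (k, i)) (a₂ := (k, j)) (π.injective hij)
        simpa using this
      have := hm.strictMono_of_injective hinj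
      intro i j hij
      have h := this hij
      simpa [blkPerm_blk] using h
    · have h := hs (fun k => (ρ k)⁻¹)
      simp only [inv_inv] at h
      show π * blkPerm l n ρ * blkPerm l n (fun k => (ρ k)⁻¹) = π
      rw [mul_assoc, h, mul_one]

/-- Laplace expansion along blocks of columns. -/
theorem laplace (l n : ℕ) (M : Matrix (Fin (l * n)) (Fin (l * n)) F) :
    ∑ σ : {σ : Equiv.Perm (Fin (l * n)) // BlockInc l n σ},
      ((Equiv.Perm.sign σ.1 : ℤ) : F) *
        ∏ k, Matrix.det (Matrix.of fun a b : Fin l => M (σ.1 (blk l n k a)) (blk l n k b))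
      = M.det := by
  rw [Matrix.det_apply', ← (Equiv.ofBijective _ (decomp_bij l n)).sum_comp,
    Fintype.sum_prod_type]
  refine Finset.sum_congr rfl fun σ _ => ?_
  simp only [Matrix.det_apply', Finset.prod_univ_sum, Fintype.piFinset_univ]
  rw [Finset.mul_sum]
  refine Finset.sum_congr rfl fun ρ _ => ?_
  simp only [Equiv.ofBijective_apply, Equiv.Perm.sign_mul, blkPerm_sign, prod_blk,
    Equiv.Perm.mul_apply, blkPerm_blk, Finset.prod_mul_distrib, Matrix.of_apply]
  push_cast
  ring

theorem blkSet_card {l n : ℕ} (σ : Equiv.Perm (Fin (l * n))) (k : Fin n) :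
    (blkSet l n σ k).card = l := by
  unfold blkSet
  rw [Finset.card_image_of_injective]
  · simp
  · intro i j hij
    have := (blk_bij l n).1 (a₁ := (k, i)) (a₂ := (k, j)) (σ.injective hij)
    simpa using this

theorem blkSet_emb {l n : ℕ} {σ : Equiv.Perm (Fin (l * n))} (hσ : BlockInc l n σ) (k : Fin n)
    (h : (blkSet l n σ k).card = l) (a : Fin l) :
    (blkSet l n σ k).orderEmbOfFin h a = σ (blk l n k a) := by
  have := Finset.orderEmbOfFin_unique h (f := fun i => σ (blk l n k i))
    (fun x => by simp [blkSet]) (hσ k)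
  exact (congrFun this a).symm

/-- The concatenation of the increasing enumerations of the sets `K k`. -/
def cols {l n N : ℕ} (K : Fin n → {K : Finset (Fin N) // K.card = l}) (x : Fin (l * n)) : Fin N :=
  (K ((blkEquiv l n).symm x).1).1.orderEmbOfFin (K ((blkEquiv l n).symm x).1).2
    ((blkEquiv l n).symm x).2

theorem cols_blk {l n N : ℕ} (K : Fin n → {K : Finset (Fin N) // K.card = l})
    (k : Fin n) (i : Fin l) :
    cols K (blk l n k i) = (K k).1.orderEmbOfFin (K k).2 i := by
  have h : ∀ x : Fin n × Fin l, x = (k, i) →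
      (K x.1).1.orderEmbOfFin (K x.1).2 x.2 = (K k).1.orderEmbOfFin (K k).2 i := by
    rintro x rfl
    rfl
  exact h _ (blkEquiv_symm_blk l n k i)

/-- The family of sets coming from a subset `P` and a block-increasing permutation. -/
def toK {l n N : ℕ}
    (x : {P : Finset (Fin N) // P.card = l * n} ×
      {σ : Equiv.Perm (Fin (l * n)) // BlockInc l n σ}) :
    Fin n → {K : Finset (Fin N) // K.card = l} :=
  fun k => ⟨(blkSet l n x.2.1 k).map (x.1.1.orderEmbOfFin x.1.2).toEmbedding, by
    rw [Finset.card_map, blkSet_card]⟩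

theorem cols_toK {l n N : ℕ}
    (x : {P : Finset (Fin N) // P.card = l * n} ×
      {σ : Equiv.Perm (Fin (l * n)) // BlockInc l n σ}) (y : Fin (l * n)) :
    cols (toK x) y = x.1.1.orderEmbOfFin x.1.2 (x.2.1 y) := by
  revert y
  refine congrFun (perm_ext_blk fun k i => ?_)
  rw [cols_blk]
  have := Finset.orderEmbOfFin_unique (toK x k).2
    (f := fun i => x.1.1.orderEmbOfFin x.1.2 (x.2.1 (blk l n k i)))
    (fun i => by simp [toK, blkSet])
    (fun i j hij => (x.1.1.orderEmbOfFin x.1.2).strictMono (x.2.2 k hij))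
  exact (congrFun this i).symm

theorem toK_inj {l n N : ℕ} : Function.Injective (toK (l := l) (n := n) (N := N)) := by
  rintro ⟨⟨P, hP⟩, ⟨σ, hσ⟩⟩ ⟨⟨P', hP'⟩, ⟨σ', hσ'⟩⟩ h
  have h1 : ∀ y, P.orderEmbOfFin hP (σ y) = P'.orderEmbOfFin hP' (σ' y) := by
    intro y
    have e1 := cols_toK ⟨⟨P, hP⟩, ⟨σ, hσ⟩⟩ y
    have e2 := cols_toK ⟨⟨P', hP'⟩, ⟨σ', hσ'⟩⟩ y
    rw [← e1, h, e2]
  have h2 : P = P' := by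
    apply Finset.coe_injective
    rw [← Finset.range_orderEmbOfFin P hP, ← Finset.range_orderEmbOfFin P' hP']
    ext z
    constructor
    · rintro ⟨i, rfl⟩
      exact ⟨σ' (σ.symm i), by simp [← h1]⟩
    · rintro ⟨i, rfl⟩
      exact ⟨σ (σ'.symm i), by simp [h1]⟩
  subst h2
  have h3 : σ = σ' := by
    ext1 y
    exact (P.orderEmbOfFin hP).injective (h1 y)
  subst h3
  rfl

theorem toK_surj {l n N : ℕ} (K : Fin n → {K : Finset (Fin N) // K.card = l})
    (hK : Function.Injective (cols K)) : K ∈ Set.range (toK (l := l) (n := n) (N := N)) := by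
  let P : Finset (Fin N) := Finset.univ.image (cols K)
  have hP : P.card = l * n := by
    rw [Finset.card_image_of_injective _ hK]; simp
  have hmem : ∀ y, cols K y ∈ P := fun y => Finset.mem_image_of_mem _ (Finset.mem_univ _)
  let f : Fin (l * n) → Fin (l * n) := fun y => (P.orderIsoOfFin hP).symm ⟨cols K y, hmem y⟩
  have hf : ∀ y, P.orderEmbOfFin hP (f y) = cols K y := by
    intro y
    rw [← Finset.coe_orderIsoOfFin_apply]
    simp [f]
  have hfi : Function.Injective f := by
    intro y z hyz
    apply hK
    rw [← hf, ← hf, hyz]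
  let σ : Equiv.Perm (Fin (l * n)) := Equiv.ofBijective f (Finite.injective_iff_bijective.1 hfi)
  have hσ : BlockInc l n σ := by
    intro k i j hij
    rw [← (P.orderEmbOfFin hP).lt_iff_lt]
    show P.orderEmbOfFin hP (f _) < P.orderEmbOfFin hP (f _)
    rw [hf, hf, cols_blk, cols_blk]
    exact ((K k).1.orderEmbOfFin (K k).2).strictMono hij
  refine ⟨⟨⟨P, hP⟩, ⟨σ, hσ⟩⟩, ?_⟩
  funext k
  apply Subtype.ext
  apply Finset.coe_injective
  have e1 := Finset.range_orderEmbOfFin (K k).1 (K k).2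
  have e2 := Finset.range_orderEmbOfFin (toK ⟨⟨P, hP⟩, ⟨σ, hσ⟩⟩ k).1
    (toK ⟨⟨P, hP⟩, ⟨σ, hσ⟩⟩ k).2
  rw [← e1, ← e2]
  congr 1
  funext i
  rw [← cols_blk, ← cols_blk, cols_toK]
  exact hf _

theorem hyperpf_fin (l n m : ℕ) (B : (Fin m → Finset (Fin (l * n))) → F) :
    hyperpf l n B = (n.factorial : F)⁻¹ *
    ∑ σ : Fin m → Equiv.Perm (Fin (l * n)),
      if ∀ s, BlockInc l n (σ s) then
        (∏ s, ((Equiv.Perm.sign (σ s) : ℤ) : F)) *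
          ∏ k : Fin n, B fun s => blkSet l n (σ s) k
      else 0 := by
  unfold hyperpf
  congr!

theorem hyperhf_fin (l n m : ℕ) (B : (Fin m → Finset (Fin (l * n))) → F) :
    hyperhf l n B = (n.factorial : F)⁻¹ *
    ∑ σ : Fin m → Equiv.Perm (Fin (l * n)),
      if ∀ s, BlockInc l n (σ s) then
        ∏ k : Fin n, B fun s => blkSet l n (σ s) k
      else 0 := by
  unfold hyperhf
  congr!

theorem main_formula (l r n N : ℕ) (hr : 0 < r)
    (H : Fin r → Matrix (Fin (l * n)) (Fin N) F)
    (A : Finset (Fin N) → F)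
    (Q : (Fin r → Finset (Fin (l * n))) → F)
    (hQ : ∀ I : Fin r → Finset (Fin (l * n)), ∀ hI : ∀ s, (I s).card = l,
      Q I = ∑ K : Finset (Fin N),
        if hK : K.card = l then
          A K * ∏ s : Fin r,
            Matrix.det (Matrix.of fun a b : Fin l =>
              H s ((I s).orderEmbOfFin (hI s) a) (K.orderEmbOfFin hK b))
        else 0) :
    hyperpf l n Q = (n.factorial : F)⁻¹ *
      ∑ P : {P : Finset (Fin N) // P.card = l * n},
        ∑ τ : {σ : Equiv.Perm (Fin (l * n)) // BlockInc l n σ},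
          (((Equiv.Perm.sign τ.1 : ℤ) : F) ^ r *
            ∏ k, A ((blkSet l n τ.1 k).map (P.1.orderEmbOfFin P.2).toEmbedding)) *
            ∏ s : Fin r, Matrix.det (Matrix.of fun a (b : Fin (l * n)) =>
                  H s a (P.1.orderEmbOfFin P.2 b)) := by
  rw [hyperpf_fin]
  congr 1
  have step1 : ∀ σ : Fin r → Equiv.Perm (Fin (l * n)),
      (if ∀ s, BlockInc l n (σ s) then
        (∏ s, ((Equiv.Perm.sign (σ s) : ℤ) : F)) *
          ∏ k : Fin n, Q fun s => blkSet l n (σ s) k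
      else 0) = ∑ K : Fin n → {K : Finset (Fin N) // K.card = l},
        (∏ k, A (K k).1) * ∏ s, if BlockInc l n (σ s) then
          ((Equiv.Perm.sign (σ s) : ℤ) : F) * ∏ k, Matrix.det (Matrix.of fun a b : Fin l =>
            H s (σ s (blk l n k a)) (cols K (blk l n k b))) else 0 := by
    intro σ
    by_cases hσ : ∀ s, BlockInc l n (σ s)
    · rw [if_pos hσ]
      have : ∀ k, Q (fun s => blkSet l n (σ s) k) =
          ∑ K : {K : Finset (Fin N) // K.card = l}, A K.1 * ∏ s : Fin r,
            Matrix.det (Matrix.of fun a b : Fin l =>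
              H s (σ s (blk l n k a)) (K.1.orderEmbOfFin K.2 b)) := by
        intro k
        rw [hQ _ (fun s => blkSet_card (σ s) k), sum_dite_subtype]
        simp only [blkSet_emb (hσ _)]
      simp only [this, Finset.prod_univ_sum, Fintype.piFinset_univ]
      rw [Finset.mul_sum]
      refine Finset.sum_congr rfl fun K _ => ?_
      simp only [if_pos (hσ _), cols_blk, Finset.prod_mul_distrib]
      rw [Finset.prod_comm (s := (Finset.univ : Finset (Fin n)))]
      ring
    · rw [if_neg hσ]
      push Not at hσ
      obtain ⟨s, hs⟩ := hσ
      symm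
      refine Finset.sum_eq_zero fun K _ => ?_
      rw [Finset.prod_eq_zero (Finset.mem_univ s) (if_neg hs), mul_zero]
  simp only [step1]
  rw [Finset.sum_comm]
  have step2 : ∀ K : Fin n → {K : Finset (Fin N) // K.card = l},
      (∑ σ : Fin r → Equiv.Perm (Fin (l * n)),
        (∏ k, A (K k).1) * ∏ s, if BlockInc l n (σ s) then
          ((Equiv.Perm.sign (σ s) : ℤ) : F) * ∏ k, Matrix.det (Matrix.of fun a b : Fin l =>
            H s (σ s (blk l n k a)) (cols K (blk l n k b))) else 0)
      = (∏ k, A (K k).1) * ∏ s, Matrix.det (Matrix.of fun a b => H s a (cols K b)) := by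
    intro K
    rw [← Finset.mul_sum]
    congr 1
    have := Finset.prod_univ_sum (fun _ : Fin r => (Finset.univ : Finset (Equiv.Perm (Fin (l * n)))))
      (fun s σ => if BlockInc l n σ then
          ((Equiv.Perm.sign σ : ℤ) : F) * ∏ k, Matrix.det (Matrix.of fun a b : Fin l =>
            H s (σ (blk l n k a)) (cols K (blk l n k b))) else 0)
    rw [Fintype.piFinset_univ] at this
    rw [← this]
    refine Finset.prod_congr rfl fun s _ => ?_
    rw [← laplace]
    exact sum_dite_subtype (fun σ => BlockInc l n σ) (fun σ _ =>
      ((Equiv.Perm.sign σ : ℤ) : F) * ∏ k, Matrix.det (Matrix.of fun a b : Fin l =>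
            H s (σ (blk l n k a)) (cols K (blk l n k b))))
  simp only [step2]
  rw [← Fintype.sum_prod_type']
  symm
  refine Fintype.sum_of_injective toK toK_inj _ _ ?_ ?_
  · intro K hK
    have hni : ¬ Function.Injective (cols K) := fun h => hK (toK_surj K h)
    simp only [Function.Injective, not_forall] at hni
    obtain ⟨x, y, hxy, hne⟩ := hni
    rw [Finset.prod_eq_zero (Finset.mem_univ (⟨0, hr⟩ : Fin r)), mul_zero]
    refine Matrix.det_zero_of_column_eq hne fun a => ?_
    simp [hxy]
  · rintro ⟨P, τ⟩
    have : ∀ s, Matrix.det (Matrix.of fun a b => H s a (cols (toK ⟨P, τ⟩) b)) =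
        ((Equiv.Perm.sign τ.1 : ℤ) : F) * Matrix.det (Matrix.of fun a (b : Fin (l * n)) =>
                  H s a (P.1.orderEmbOfFin P.2 b)) := by
      intro s
      rw [← Matrix.det_permute']
      congr 1
      ext a b
      simp [cols_toK]
    simp only [this, Finset.prod_mul_distrib, Finset.prod_const, Finset.card_univ,
      Fintype.card_fin]
    simp only [toK]
    ring

/-- Pfaffian/hafnian dichotomy according to the parity of `r`. -/
theorem pf_hf_dichotomy (l r n N : ℕ) (hl : Even l) (hl0 : 0 < l) (hr : 0 < r)
    (hn : 0 < n) (hN : l * n ≤ N)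
    (H : Fin r → Matrix (Fin (l * n)) (Fin N) F)
    (A : Finset (Fin N) → F)
    (Q : (Fin r → Finset (Fin (l * n))) → F)
    (hQ : ∀ I : Fin r → Finset (Fin (l * n)), ∀ hI : ∀ s, (I s).card = l,
      Q I = ∑ K : Finset (Fin N),
        if hK : K.card = l then
          A K * ∏ s : Fin r,
            Matrix.det (Matrix.of fun a b : Fin l =>
              H s ((I s).orderEmbOfFin (hI s) a) (K.orderEmbOfFin hK b))
        else 0) :
    (Odd r → hyperpf l n Q
      = ∑ P : Finset (Fin N),
          if hP : P.card = l * n then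
            hyperpf l n (fun I : Fin 1 → Finset (Fin (l * n)) =>
                A ((I 0).map (P.orderEmbOfFin hP).toEmbedding)) *
              ∏ s : Fin r,
                Matrix.det (Matrix.of fun a (b : Fin (l * n)) =>
                  H s a (P.orderEmbOfFin hP b))
          else 0)
    ∧ (Even r → hyperpf l n Q
      = ∑ P : Finset (Fin N),
          if hP : P.card = l * n then
            hyperhf l n (fun I : Fin 1 → Finset (Fin (l * n)) =>
                A ((I 0).map (P.orderEmbOfFin hP).toEmbedding)) *
              ∏ s : Fin r,
                Matrix.det (Matrix.of fun a (b : Fin (l * n)) =>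
                  H s a (P.orderEmbOfFin hP b))
          else 0) := by
  have hfun : ∀ f : Equiv.Perm (Fin (l * n)) → F,
      (∑ σ : Fin 1 → Equiv.Perm (Fin (l * n)),
        if ∀ s, BlockInc l n (σ s) then f (σ 0) else 0)
      = ∑ τ : {σ : Equiv.Perm (Fin (l * n)) // BlockInc l n σ}, f τ.1 := by
    intro f
    have h := sum_dite_subtype (fun σ => BlockInc l n σ) (fun σ _ => f σ)
    rw [← h]
    refine Fintype.sum_equiv (Equiv.funUnique (Fin 1) _) _ _ fun σ => ?_
    simp only [dite_eq_ite]
    refine if_congr ?_ rfl rfl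
    rw [Fin.forall_fin_one]
    rfl
  constructor
  · intro hodd
    rw [main_formula l r n N hr H A Q hQ, sum_dite_subtype, Finset.mul_sum]
    refine Finset.sum_congr rfl fun P _ => ?_
    rw [← Finset.sum_mul, ← mul_assoc]
    congr 1
    rw [hyperpf_fin]
    congr 1
    have h := hfun fun σ => ((Equiv.Perm.sign σ : ℤ) : F) *
      ∏ k, A ((blkSet l n σ k).map (P.1.orderEmbOfFin P.2).toEmbedding)
    simp only [Fin.prod_univ_one]
    refine Eq.trans ?_ h.symm
    refine Finset.sum_congr rfl fun τ _ => ?_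
    rcases Int.units_eq_one_or (Equiv.Perm.sign τ.1) with h1 | h1 <;> simp [h1, hodd.neg_one_pow]
  · intro heven
    rw [main_formula l r n N hr H A Q hQ, sum_dite_subtype, Finset.mul_sum]
    refine Finset.sum_congr rfl fun P _ => ?_
    rw [← Finset.sum_mul, ← mul_assoc]
    congr 1
    rw [hyperhf_fin]
    congr 1
    have h := hfun fun σ =>
      ∏ k, A ((blkSet l n σ k).map (P.1.orderEmbOfFin P.2).toEmbedding)
    refine Eq.trans ?_ h.symm
    refine Finset.sum_congr rfl fun τ _ => ?_
    rcases Int.units_eq_one_or (Equiv.Perm.sign τ.1) with h1 | h1 <;> simp [h1, heven.neg_one_pow]
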